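/- Let α > −1 and β be real parameters and let J(x,y,z) denote the 3×3 Jacobian matrix of the vector field of system (18). Then for either sign ε = ±1, the averaged matrix A = (1/(2π)) ∫₀^{2π} J(√(1+α) sin s, √(1+α) cos s, εβ) ds equals ![![α(1+α), 1, 0], ![−1, α(1+α), 0], ![0, 0, −2β²]], and the eigenvalues of A over ℂ are −2β², α² + α + i, and α² + α − i; in particular the real parts of its eigenvalues are −2β², α² + α, α² + α. -/

import Mathlib

open Real MeasureTheory

/-- The vector field of system (18). -/
noncomputable def vf18 (α β : ℝ) : (Fin 3 → ℝ) → (Fin 3 → ℝ) := fun v =>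
  ![v 1 + v 0 * (1 - v 0 ^ 2 - v 1 ^ 2) * (1 + α - v 0 ^ 2 - v 1 ^ 2),
    -v 0 + v 1 * (1 - v 0 ^ 2 - v 1 ^ 2) * (1 + α - v 0 ^ 2 - v 1 ^ 2),
    β ^ 2 * v 2 - v 2 ^ 3]

/-- The Jacobian matrix of a vector field on ℝ³: entry (i, j) is the partial derivative of
the i-th component with respect to the j-th coordinate. -/
noncomputable def jacobian (F : (Fin 3 → ℝ) → (Fin 3 → ℝ)) (p : Fin 3 → ℝ) :
    Matrix (Fin 3) (Fin 3) ℝ :=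
  Matrix.of fun i j => fderiv ℝ (fun v => F v i) p (Pi.single j 1)

/-!
System (18) is a rotation of the horizontal plane with a radial rate `φ` depending only on
`x² + y²`, together with a decoupled vertical equation `z' = ψ z`. On a horizontal circle of
radius `ρ` the only nonconstant terms of the Jacobian are multiples of `sin²`, `cos²` and
`sin * cos`, whose means are `1/2`, `1/2` and `0`. The average is therefore a rotation-scaling with
factor `φ (ρ²) + ρ² φ' (ρ²)` in the plane and `ψ' z` on the axis. Here
`φ u = (1 - u) (1 + α - u)` vanishes at `ρ² = 1 + α` with derivative `α`, and
`ψ z = β² z - z³` has derivative `-2β²` at `z = ±β`.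
-/

/-- The field on `ℝ³` that couples a rotation of the horizontal plane, with radial rate `φ`
evaluated at the squared distance to the vertical axis, to an independent vertical motion `ψ`.
Expressing the rate through `x² + y²` keeps the field smooth on the axis. -/
def rotationalField (φ ψ : ℝ → ℝ) : (Fin 3 → ℝ) → (Fin 3 → ℝ) := fun v =>
  ![v 1 + v 0 * φ (v 0 ^ 2 + v 1 ^ 2), -v 0 + v 1 * φ (v 0 ^ 2 + v 1 ^ 2), ψ (v 2)]

/-- The entrywise mean of the Jacobian of `F` along the curve `γ` over the parameter interval
`[0, 2π]`, as in the variational equation of a `2π`-periodic orbit. -/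
noncomputable def averagedJacobian (F : (Fin 3 → ℝ) → (Fin 3 → ℝ)) (γ : ℝ → Fin 3 → ℝ) :
    Matrix (Fin 3) (Fin 3) ℝ :=
  Matrix.of fun i j => (2 * π)⁻¹ * ∫ s in (0 : ℝ)..(2 * π), jacobian F (γ s) i j

theorem jacobian_apply_of_hasFDerivAt {F : (Fin 3 → ℝ) → (Fin 3 → ℝ)} {p : Fin 3 → ℝ}
    {i : Fin 3} {L : (Fin 3 → ℝ) →L[ℝ] ℝ} (h : HasFDerivAt (fun v => F v i) L p) (j : Fin 3) :
    jacobian F p i j = L (Pi.single j 1) := by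
  rw [jacobian, Matrix.of_apply, h.fderiv]

section RotationalField

variable {φ ψ : ℝ → ℝ} {φ' ψ' : ℝ}

theorem jacobian_rotationalField {p : Fin 3 → ℝ}
    (hφ : HasDerivAt φ φ' (p 0 ^ 2 + p 1 ^ 2)) (hψ : HasDerivAt ψ ψ' (p 2)) :
    jacobian (rotationalField φ ψ) p =
      !![φ (p 0 ^ 2 + p 1 ^ 2) + 2 * φ' * p 0 ^ 2, 1 + 2 * φ' * (p 0 * p 1), 0;
        -1 + 2 * φ' * (p 0 * p 1), φ (p 0 ^ 2 + p 1 ^ 2) + 2 * φ' * p 1 ^ 2, 0;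
        0, 0, ψ'] := by
  have hcoord (k : Fin 3) : HasFDerivAt (fun v : Fin 3 → ℝ => v k)
      (ContinuousLinearMap.proj (R := ℝ) (φ := fun _ : Fin 3 => ℝ) k) p := hasFDerivAt_apply k p
  have hrate := hφ.comp_hasFDerivAt p (((hcoord 0).pow 2).add ((hcoord 1).pow 2))
  have hrow₀ := jacobian_apply_of_hasFDerivAt (F := rotationalField φ ψ) (i := 0)
    ((hcoord 1).add ((hcoord 0).mul hrate))
  have hrow₁ := jacobian_apply_of_hasFDerivAt (F := rotationalField φ ψ) (i := 1)
    ((hcoord 0).neg.add ((hcoord 1).mul hrate))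
  have hrow₂ := jacobian_apply_of_hasFDerivAt (F := rotationalField φ ψ) (i := 2)
    (hψ.comp_hasFDerivAt p (hcoord 2))
  ext i j
  fin_cases i <;> simp only [Fin.zero_eta, Fin.mk_one, Fin.reduceFinMk, hrow₀, hrow₁, hrow₂] <;>
    fin_cases j <;> simp <;> ring

theorem jacobian_rotationalField_circle {ρ z : ℝ} (hφ : HasDerivAt φ φ' (ρ ^ 2))
    (hψ : HasDerivAt ψ ψ' z) (s : ℝ) :
    jacobian (rotationalField φ ψ) ![ρ * sin s, ρ * cos s, z] =
      !![φ (ρ ^ 2) + 2 * ρ ^ 2 * φ' * sin s ^ 2, 1 + 2 * ρ ^ 2 * φ' * (sin s * cos s), 0;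
        -1 + 2 * ρ ^ 2 * φ' * (sin s * cos s), φ (ρ ^ 2) + 2 * ρ ^ 2 * φ' * cos s ^ 2, 0;
        0, 0, ψ'] := by
  have hradius : (ρ * sin s) ^ 2 + (ρ * cos s) ^ 2 = ρ ^ 2 := by
    linear_combination ρ ^ 2 * sin_sq_add_cos_sq s
  rw [← hradius] at hφ
  rw [jacobian_rotationalField (p := ![ρ * sin s, ρ * cos s, z]) hφ hψ]
  ext i j
  fin_cases i <;> fin_cases j <;> simp [hradius] <;> ring

theorem mean_const (a : ℝ) : (2 * π)⁻¹ * ∫ _ in (0 : ℝ)..(2 * π), a = a := by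
  rw [intervalIntegral.integral_const, sub_zero, smul_eq_mul, inv_mul_cancel_left₀ two_pi_pos.ne']

theorem mean_const_add_mul {f : ℝ → ℝ} (hf : IntervalIntegrable f volume 0 (2 * π)) (a b : ℝ) :
    (2 * π)⁻¹ * ∫ s in (0 : ℝ)..(2 * π), (a + b * f s) =
      a + b * ((2 * π)⁻¹ * ∫ s in (0 : ℝ)..(2 * π), f s) := by
  rw [intervalIntegral.integral_add intervalIntegrable_const (hf.const_mul b), mul_add,
    mean_const, intervalIntegral.integral_const_mul, mul_left_comm]

theorem mean_sin_sq : (2 * π)⁻¹ * ∫ s in (0 : ℝ)..(2 * π), sin s ^ 2 = 1 / 2 := by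
  rw [integral_sin_sq, sin_two_pi, cos_two_pi, sin_zero, cos_zero]
  field_simp
  ring

theorem mean_cos_sq : (2 * π)⁻¹ * ∫ s in (0 : ℝ)..(2 * π), cos s ^ 2 = 1 / 2 := by
  rw [integral_cos_sq, sin_two_pi, cos_two_pi, sin_zero, cos_zero]
  field_simp
  ring

theorem mean_sin_mul_cos : (2 * π)⁻¹ * ∫ s in (0 : ℝ)..(2 * π), sin s * cos s = 0 := by
  simp [integral_sin_mul_cos₁]

theorem averagedJacobian_rotationalField_circle {ρ z : ℝ} (hφ : HasDerivAt φ φ' (ρ ^ 2))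
    (hψ : HasDerivAt ψ ψ' z) :
    averagedJacobian (rotationalField φ ψ) (fun s => ![ρ * sin s, ρ * cos s, z]) =
      !![φ (ρ ^ 2) + ρ ^ 2 * φ', 1, 0; -1, φ (ρ ^ 2) + ρ ^ 2 * φ', 0; 0, 0, ψ'] := by
  have hsin : IntervalIntegrable (fun s => sin s ^ 2) volume 0 (2 * π) :=
    (by fun_prop : Continuous fun s => sin s ^ 2).intervalIntegrable _ _
  have hcos : IntervalIntegrable (fun s => cos s ^ 2) volume 0 (2 * π) :=
    (by fun_prop : Continuous fun s => cos s ^ 2).intervalIntegrable _ _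
  have hsincos : IntervalIntegrable (fun s => sin s * cos s) volume 0 (2 * π) :=
    (by fun_prop : Continuous fun s => sin s * cos s).intervalIntegrable _ _
  ext i j
  simp only [averagedJacobian, Matrix.of_apply, jacobian_rotationalField_circle hφ hψ]
  fin_cases i <;> fin_cases j <;>
    simp only [Fin.zero_eta, Fin.mk_one, Fin.reduceFinMk, Matrix.cons_val, mean_const,
      mean_const_add_mul, hsin, hcos, hsincos, mean_sin_sq, mean_cos_sq, mean_sin_mul_cos] <;>
    ring

end RotationalField

section RotationBlock

open Polynomial

theorem charpoly_rotation_scaling_block {R : Type*} [CommRing R] (a b c : R) :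
    (!![a, b, 0; -b, a, 0; 0, 0, c] : Matrix (Fin 3) (Fin 3) R).charpoly =
      (X - C c) * ((X - C a) ^ 2 + C b ^ 2) := by
  simp only [Matrix.charpoly, Matrix.det_fin_three, Matrix.charmatrix_apply, Matrix.diagonal_apply,
    Matrix.of_apply, Matrix.cons_val, Fin.reduceEq, if_true, if_false, map_neg, map_zero]
  ring

theorem roots_charpoly_map_rotation_scaling_block {R S : Type*} [CommRing R] [CommRing S]
    [IsDomain S] (f : R →+* S) {ι : S} (hι : ι ^ 2 = -1) (a b c : R) :
    ((!![a, b, 0; -b, a, 0; 0, 0, c] : Matrix (Fin 3) (Fin 3) R).map f).charpoly.roots =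
      {f c, f a + f b * ι, f a - f b * ι} := by
  have hfactor : ((!![a, b, 0; -b, a, 0; 0, 0, c] : Matrix (Fin 3) (Fin 3) R).map f).charpoly =
      (({f c, f a + f b * ι, f a - f b * ι} : Multiset S).map fun w => X - C w).prod := by
    have hC : (C ι : S[X]) ^ 2 = -1 := by rw [← C_pow, hι, C_neg, C_1]
    rw [Matrix.charpoly_map, charpoly_rotation_scaling_block]
    simp only [Polynomial.map_mul, Polynomial.map_add, Polynomial.map_sub, Polynomial.map_pow,
      map_X, map_C, Multiset.insert_eq_cons, Multiset.map_cons, Multiset.map_singleton,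
      Multiset.prod_cons, Multiset.prod_singleton, C_add, C_sub, C_mul]
    linear_combination (X - C (f c)) * C (f b) ^ 2 * hC
  rw [hfactor, roots_multiset_prod_X_sub_C]

theorem roots_charpoly_map_ofReal_rotation_scaling_block (a b c : ℝ) :
    ((!![a, b, 0; -b, a, 0; 0, 0, c] : Matrix (Fin 3) (Fin 3) ℝ).map
        Complex.ofReal).charpoly.roots =
      {(c : ℂ), (a : ℂ) + b * Complex.I, (a : ℂ) - b * Complex.I} :=
  roots_charpoly_map_rotation_scaling_block Complex.ofRealHom Complex.I_sq a b c

end RotationBlock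

theorem vf18_eq_rotationalField (α β : ℝ) :
    vf18 α β =
      rotationalField (fun u => (1 - u) * (1 + α - u)) (fun z => β ^ 2 * z - z ^ 3) := by
  ext v i
  fin_cases i <;> simp [vf18, rotationalField] <;> ring

theorem averagedJacobian_vf18_circle {α β ρ z : ℝ} (hρ : ρ ^ 2 = 1 + α) (hz : z ^ 2 = β ^ 2) :
    averagedJacobian (vf18 α β) (fun s => ![ρ * sin s, ρ * cos s, z]) =
      !![α * (1 + α), 1, 0; -1, α * (1 + α), 0; 0, 0, -2 * β ^ 2] := by
  have hφ : HasDerivAt (fun u => (1 - u) * (1 + α - u)) α (ρ ^ 2) := by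
    refine (((hasDerivAt_id' _).const_sub 1).mul
      ((hasDerivAt_id' _).const_sub (1 + α))).congr_deriv ?_
    linear_combination 2 * hρ
  have hψ : HasDerivAt (fun u => β ^ 2 * u - u ^ 3) (-2 * β ^ 2) z := by
    refine (((hasDerivAt_id' z).const_mul (β ^ 2)).sub (hasDerivAt_pow 3 z)).congr_deriv ?_
    push_cast
    linear_combination -3 * hz
  have hdiag : (1 - ρ ^ 2) * (1 + α - ρ ^ 2) + ρ ^ 2 * α = α * (1 + α) := by
    rw [hρ]; ring
  rw [vf18_eq_rotationalField, averagedJacobian_rotationalField_circle hφ hψ, hdiag]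

/-- the averaged Jacobian along the limit cycles (v) and (vi) of system (18),
its explicit value, and its eigenvalues (with real parts −2β², α² + α, α² + α). -/
theorem stmt_7 (α β : ℝ) (hα : -1 < α) :
    ∀ ε : ℝ, ε = 1 ∨ ε = -1 →
    ∀ A : Matrix (Fin 3) (Fin 3) ℝ,
      (A = Matrix.of fun i j =>
        (2 * π)⁻¹ * ∫ s in (0:ℝ)..(2 * π),
          jacobian (vf18 α β)
            ![Real.sqrt (1 + α) * Real.sin s, Real.sqrt (1 + α) * Real.cos s, ε * β] i j) →
      A = !![α * (1 + α), 1, 0; -1, α * (1 + α), 0; 0, 0, -2 * β ^ 2] ∧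
      (A.map (Complex.ofReal)).charpoly.roots =
        {-2 * (β : ℂ) ^ 2, (α : ℂ) ^ 2 + (α : ℂ) + Complex.I,
          (α : ℂ) ^ 2 + (α : ℂ) - Complex.I} ∧
      ((A.map (Complex.ofReal)).charpoly.roots.map Complex.re) =
        {-2 * β ^ 2, α ^ 2 + α, α ^ 2 + α} := by
  intro ε hε A hA
  have hρ : √(1 + α) ^ 2 = 1 + α := sq_sqrt (by linarith)
  have hz : (ε * β) ^ 2 = β ^ 2 := by rcases hε with rfl | rfl <;> ring
  have hval : A = !![α * (1 + α), 1, 0; -1, α * (1 + α), 0; 0, 0, -2 * β ^ 2] := by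
    rw [hA]
    exact averagedJacobian_vf18_circle hρ hz
  have hroots : (A.map Complex.ofReal).charpoly.roots =
      {-2 * (β : ℂ) ^ 2, (α : ℂ) ^ 2 + α + Complex.I, (α : ℂ) ^ 2 + α - Complex.I} := by
    have hdiag : α * (1 + α) = α ^ 2 + α := by ring
    rw [hval, hdiag, roots_charpoly_map_ofReal_rotation_scaling_block]
    simp
  refine ⟨hval, hroots, ?_⟩
  rw [hroots]
  simp [← Complex.ofReal_pow]
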